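/- Let n ≥ 1 be an integer, θ ∈ (0, π/2], 1 ≤ k ≤ n, A > 0 and c₀ > 0. Let (s_i)_{i∈ℕ} be a sequence of smooth capillary functions on C_θ with τ[s_i] > 0, with 1-homogeneous extensions G_i, such that for every i: sup_{u ∈ S^n_θ} (|G_i(u)| + ‖∇G_i(u)‖ + ‖D²G_i(u)‖) ≤ A (uniform C² bound), ∫_{C_θ} s_i(ζ) ζ_j dσ(ζ) = 0 for all j = 1,…,n, and σ_k(τ[s_i])(ζ) ≥ c₀ for all ζ ∈ C_θ. Then there exists a constant c > 0 such that G_i(E_{n+1}) ≥ c for all i (i.e., the support functions of the enclosed bodies in the direction E_{n+1} are uniformly bounded below). -/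

import Mathlib

open MeasureTheory Real Set
open scoped RealInnerProductSpace

noncomputable section

abbrev V (n : ℕ) := EuclideanSpace ℝ (Fin (n + 1))

/-- The vertical unit vector `E_{n+1}`. -/
def Etop (n : ℕ) : V n := EuclideanSpace.single (Fin.last n) 1

/-- The spherical cap `S^n_θ`. -/
def sphCap (n : ℕ) (θ : ℝ) : Set (V n) :=
  {u | ‖u‖ = 1 ∧ Real.cos θ ≤ u (Fin.last n)}

/-- The boundary circle `∂S^n_θ`. -/
def sphCapBdry (n : ℕ) (θ : ℝ) : Set (V n) :=
  {u | ‖u‖ = 1 ∧ u (Fin.last n) = Real.cos θ}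

/-- The capillary cap `C_θ`. -/
def capCap (n : ℕ) (θ : ℝ) : Set (V n) :=
  {ζ | 0 ≤ ζ (Fin.last n) ∧ ‖ζ + Real.cos θ • Etop n‖ = 1}

/-- The open cone over `S^n_θ`. -/
def coneCap (n : ℕ) (θ : ℝ) : Set (V n) :=
  {x | ∃ l : ℝ, 0 < l ∧ ∃ u ∈ sphCap n θ, x = l • u}

/-- `G` is a positively 1-homogeneous extension of `g : C_θ → ℝ` which is `C^m` on an
open neighborhood of the cone over `S^n_θ`. -/
def IsHomExt (n : ℕ) (θ : ℝ) (m : ℕ∞) (g G : V n → ℝ) : Prop :=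
  (∃ U : Set (V n), IsOpen U ∧ coneCap n θ ⊆ U ∧ ContDiffOn ℝ m G U) ∧
  (∀ l : ℝ, 0 < l → ∀ u ∈ sphCap n θ, G (l • u) = l * G u) ∧
  (∀ ζ ∈ capCap n θ, G (ζ + Real.cos θ • Etop n) = g ζ)

/-- The Hessian of `G` at `u` as a quadratic/bilinear form. -/
def hessQ (n : ℕ) (G : V n → ℝ) (u v w : V n) : ℝ :=
  fderiv ℝ (fderiv ℝ G) u v w

/-- The Hessian matrix `D²G(u)` in the standard coordinates. -/
def hessM (n : ℕ) (G : V n → ℝ) (u : V n) : Matrix (Fin (n + 1)) (Fin (n + 1)) ℝ :=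
  fun i j => fderiv ℝ (fderiv ℝ G) u (EuclideanSpace.single i 1) (EuclideanSpace.single j 1)

/-- `σ_j` of the eigenvalues of `D²G(u)` (via characteristic polynomial coefficients). -/
def sigmaElem (n : ℕ) (j : ℕ) (G : V n → ℝ) (u : V n) : ℝ :=
  (-1 : ℝ) ^ j * ((hessM n G u).charpoly.coeff (n + 1 - j))

/-- `τ[g] ≥ 0` : the Hessian of the extension is positive semidefinite on `S^n_θ`. -/
def TauNonneg (n : ℕ) (θ : ℝ) (G : V n → ℝ) : Prop :=
  ∀ u ∈ sphCap n θ, ∀ v : V n, 0 ≤ hessQ n G u v v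

/-- `τ[g] > 0`. -/
def TauPos (n : ℕ) (θ : ℝ) (G : V n → ℝ) : Prop :=
  TauNonneg n θ G ∧
  ∀ u ∈ sphCap n θ, ∀ v : V n, v ≠ 0 → ⟪v, u⟫ = 0 → 0 < hessQ n G u v v

/-- Capillary (Robin) boundary condition: `∂_{n+1}G = 0` on `∂S^n_θ`. -/
def IsCapillaryF (n : ℕ) (θ : ℝ) (G : V n → ℝ) : Prop :=
  ∀ u ∈ sphCapBdry n θ, fderiv ℝ G u (Etop n) = 0

/-- Reflection negating the horizontal coordinates. -/
def horizNeg (n : ℕ) (ζ : V n) : V n := (2 * ζ (Fin.last n)) • Etop n - ζ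

/-- Support function of a set. -/
def suppFn (n : ℕ) (K : Set (V n)) (u : V n) : ℝ := sSup ((fun y => ⟪u, y⟫) '' K)

/-- Relative interior (within the hyperplane `{x_{n+1}=0}`) of the base `K ∩ {x_{n+1}=0}`. -/
def relintBase (n : ℕ) (K : Set (V n)) : Set (V n) :=
  {x | x (Fin.last n) = 0 ∧ ∃ ε > 0, ∀ y : V n, y (Fin.last n) = 0 → ‖y - x‖ < ε → y ∈ K}

/-- A `θ`-capillary convex body. -/
def IsCapBody (n : ℕ) (θ : ℝ) (K : Set (V n)) : Prop :=
  IsCompact K ∧ Convex ℝ K ∧ (interior K).Nonempty ∧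
  (∀ x ∈ K, 0 ≤ x (Fin.last n)) ∧
  (∀ x ∈ K, 0 < x (Fin.last n) → ∀ u : V n, ‖u‖ = 1 → ⟪u, x⟫ = suppFn n K u →
    Real.cos θ ≤ u (Fin.last n)) ∧
  (∀ v : V n, ‖v‖ = 1 → v (Fin.last n) = 0 →
    suppFn n K (Real.sin θ • v + Real.cos θ • Etop n) = Real.sin θ * suppFn n K v) ∧
  (relintBase n K).Nonempty

/-- `ψ` is one of `x²`, `x^p (p<0)`, `-log x`. -/
def PsiOK (ψ : ℝ → ℝ) : Prop :=
  (ψ = fun x : ℝ => x ^ 2) ∨ (∃ p : ℝ, p < 0 ∧ ψ = fun x : ℝ => x ^ p) ∨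
    (ψ = fun x : ℝ => -Real.log x)


/-- The open cone of vectors making an angle less than `θ` with the vertical direction. -/
def openCone (n : ℕ) (θ : ℝ) : Set (V n) := {x | Real.cos θ * ‖x‖ < x (Fin.last n)}

section Cone

variable {n : ℕ} {θ : ℝ}

lemma norm_Etop (n : ℕ) : ‖Etop n‖ = 1 := by simp [Etop]

lemma Etop_last (n : ℕ) : Etop n (Fin.last n) = 1 := by simp [Etop]

lemma isOpen_openCone (n : ℕ) (θ : ℝ) : IsOpen (openCone n θ) :=
  isOpen_lt (by fun_prop) (by fun_prop)

lemma norm_pos_of_mem_openCone {x : V n} (hx : x ∈ openCone n θ) : 0 < ‖x‖ := by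
  rw [norm_pos_iff]
  rintro rfl
  simp [openCone] at hx

lemma smul_mem_openCone {x : V n} (hx : x ∈ openCone n θ) {l : ℝ} (hl : 0 < l) :
    l • x ∈ openCone n θ := by
  have hx' : Real.cos θ * ‖x‖ < x (Fin.last n) := hx
  change Real.cos θ * ‖l • x‖ < (l • x) (Fin.last n)
  rw [norm_smul, Real.norm_of_nonneg hl.le, PiLp.smul_apply, smul_eq_mul]
  nlinarith

lemma add_smul_Etop_mem_openCone {x : V n} (hx : x ∈ openCone n θ)
    {r : ℝ} (hr : 0 ≤ r) : x + r • Etop n ∈ openCone n θ := by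
  have hx' : Real.cos θ * ‖x‖ < x (Fin.last n) := hx
  change Real.cos θ * ‖x + r • Etop n‖ < (x + r • Etop n) (Fin.last n)
  have hn : ‖r • Etop n‖ = r := by rw [norm_smul, norm_Etop, Real.norm_of_nonneg hr, mul_one]
  have h1 : ‖x + r • Etop n‖ ≤ ‖x‖ + r := (norm_add_le _ _).trans_eq (by rw [hn])
  have h2 : ‖x‖ ≤ ‖x + r • Etop n‖ + r := by
    have := norm_sub_le (x + r • Etop n) (r • Etop n)
    rwa [add_sub_cancel_right, hn] at this
  rw [PiLp.add_apply, PiLp.smul_apply, Etop_last, smul_eq_mul, mul_one]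
  have h3 : |‖x + r • Etop n‖ - ‖x‖| ≤ r := abs_le.2 ⟨by linarith, by linarith⟩
  have h4 : Real.cos θ * (‖x + r • Etop n‖ - ‖x‖) ≤ 1 * r := by
    refine (le_abs_self _).trans ?_
    rw [abs_mul]
    exact mul_le_mul (Real.abs_cos_le_one θ) h3 (abs_nonneg _) zero_le_one
  linarith

lemma inv_norm_smul_mem_sphCap {x : V n} (hx : x ∈ openCone n θ) :
    ‖x‖⁻¹ • x ∈ sphCap n θ := by
  have h := norm_pos_of_mem_openCone hx
  have hx' : Real.cos θ * ‖x‖ < x (Fin.last n) := hx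
  refine ⟨?_, ?_⟩
  · rw [norm_smul, norm_inv, norm_norm, inv_mul_cancel₀ h.ne']
  · rw [PiLp.smul_apply, smul_eq_mul, inv_mul_eq_div, le_div_iff₀ h]
    exact hx'.le

lemma sphCap_subset_coneCap : sphCap n θ ⊆ coneCap n θ :=
  fun u hu => ⟨1, one_pos, u, hu, by simp⟩

lemma openCone_subset_coneCap : openCone n θ ⊆ coneCap n θ := fun x hx =>
  ⟨‖x‖, norm_pos_of_mem_openCone hx, _, inv_norm_smul_mem_sphCap hx,
    (smul_inv_smul₀ (norm_pos_of_mem_openCone hx).ne' x).symm⟩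

lemma Etop_mem_openCone (hθ : θ ∈ Ioc 0 (π / 2)) : Etop n ∈ openCone n θ := by
  change Real.cos θ * ‖Etop n‖ < Etop n (Fin.last n)
  rw [norm_Etop, Etop_last, mul_one, ← Real.cos_zero]
  exact Real.cos_lt_cos_of_nonneg_of_le_pi_div_two le_rfl hθ.2 hθ.1

lemma norm_add_smul_Etop_sq {x : V n} (hx : x (Fin.last n) = 0) (r : ℝ) :
    ‖x + r • Etop n‖ ^ 2 = ‖x‖ ^ 2 + r ^ 2 := by
  have h : ⟪x, r • Etop n⟫ = 0 := by
    rw [inner_smul_right, Etop, EuclideanSpace.inner_single_right]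
    simp [hx]
  rw [norm_add_sq_real, h, norm_smul, norm_Etop]
  simp

end Cone

/-- A function on `[0, 1]` whose second derivative is at most `C` in absolute value grows at most
quadratically away from its tangent at `0`. -/
lemma le_quadratic_of_norm_second_deriv_le {f f' f'' : ℝ → ℝ} {C : ℝ}
    (hf : ∀ r ∈ Icc (0 : ℝ) 1, HasDerivAt f (f' r) r)
    (hf' : ∀ r ∈ Icc (0 : ℝ) 1, HasDerivAt f' (f'' r) r)
    (hC : ∀ r ∈ Icc (0 : ℝ) 1, ‖f'' r‖ ≤ C) {t : ℝ} (ht : t ∈ Icc (0 : ℝ) 1) :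
    f t ≤ f 0 + t * f' 0 + C * t ^ 2 := by
  have hlip : ∀ r ∈ Icc (0 : ℝ) t, ‖f' r - f' 0‖ ≤ C * t := by
    intro r hr
    have hr1 : r ∈ Icc (0 : ℝ) 1 := ⟨hr.1, hr.2.trans ht.2⟩
    have h1 := Convex.norm_image_sub_le_of_norm_hasDerivWithin_le
      (fun r hr => (hf' r hr).hasDerivWithinAt) hC (convex_Icc (0 : ℝ) 1)
      ⟨le_rfl, zero_le_one⟩ hr1
    rw [sub_zero, Real.norm_of_nonneg hr.1] at h1
    exact h1.trans (mul_le_mul_of_nonneg_left hr.2 ((norm_nonneg _).trans (hC r hr1)))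
  have hd : ∀ r ∈ Icc (0 : ℝ) t,
      HasDerivWithinAt (fun r : ℝ => f r - r * f' 0) (f' r - f' 0) (Icc 0 t) r := by
    intro r hr
    have h2 := (hasDerivAt_id r).mul_const (f' 0)
    rw [one_mul] at h2
    exact ((hf r ⟨hr.1, hr.2.trans ht.2⟩).sub h2).hasDerivWithinAt
  have h3 := Convex.norm_image_sub_le_of_norm_hasDerivWithin_le hd hlip (convex_Icc (0 : ℝ) t)
    ⟨le_rfl, ht.1⟩ ⟨ht.1, le_rfl⟩
  rw [zero_mul, sub_zero, sub_zero, Real.norm_of_nonneg ht.1] at h3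
  have h4 := (le_abs_self _).trans h3
  linarith

section HomExt

variable {n : ℕ} {θ : ℝ} {s G : V n → ℝ}

lemma IsHomExt.contDiffAt (h : IsHomExt n θ ⊤ s G) {x : V n} (hx : x ∈ coneCap n θ) :
    ContDiffAt ℝ ((⊤ : ℕ∞) : WithTop ℕ∞) G x := by
  obtain ⟨U, hU, hsub, hG⟩ := h.1
  exact hG.contDiffAt (hU.mem_nhds (hsub hx))

lemma IsHomExt.differentiableAt (h : IsHomExt n θ ⊤ s G) {x : V n} (hx : x ∈ coneCap n θ) :
    DifferentiableAt ℝ G x :=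
  (h.contDiffAt hx).differentiableAt (by simp)

lemma IsHomExt.differentiableAt_fderiv (h : IsHomExt n θ ⊤ s G) {x : V n}
    (hx : x ∈ coneCap n θ) : DifferentiableAt ℝ (fderiv ℝ G) x := by
  have h2 : ContDiffAt ℝ 1 (fderiv ℝ G) x :=
    (h.contDiffAt hx).fderiv_right (m := 1) (WithTop.coe_le_coe.2 (le_top : (1 + 1 : ℕ∞) ≤ ⊤))
  exact h2.differentiableAt (by simp)

lemma IsHomExt.hessQ_symm (h : IsHomExt n θ ⊤ s G) {x : V n} (hx : x ∈ coneCap n θ)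
    (v w : V n) : hessQ n G x v w = hessQ n G x w v := by
  have h2 : IsSymmSndFDerivAt ℝ G x := (h.contDiffAt hx).isSymmSndFDerivAt (by
    rw [minSmoothness_of_isRCLikeNormedField]
    exact WithTop.coe_le_coe.2 (le_top : (2 : ℕ∞) ≤ ⊤))
  exact h2.eq v w

lemma hasDerivAt_fderiv_apply {γ : ℝ → V n} {w : V n} {r : ℝ}
    (hG : DifferentiableAt ℝ (fderiv ℝ G) (γ r)) (hγ : HasDerivAt γ w r) (v : V n) :
    HasDerivAt (fun r => fderiv ℝ G (γ r) v) (hessQ n G (γ r) w v) r := by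
  have h := (ContinuousLinearMap.apply ℝ ℝ v).hasFDerivAt.comp_hasDerivAt r
    (hG.hasFDerivAt.comp_hasDerivAt r hγ)
  exact h

lemma IsHomExt.apply_smul (h : IsHomExt n θ ⊤ s G) {x : V n} (hx : x ∈ openCone n θ)
    {l : ℝ} (hl : 0 < l) : G (l • x) = l * G x := by
  have hp := norm_pos_of_mem_openCone hx
  have hu := inv_norm_smul_mem_sphCap hx
  have e1 : x = ‖x‖ • (‖x‖⁻¹ • x) := (smul_inv_smul₀ hp.ne' x).symm
  have e2 : l • x = (l * ‖x‖) • (‖x‖⁻¹ • x) := by rw [mul_smul, ← e1]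
  have h1 := h.2.1 _ (mul_pos hl hp) _ hu
  have h2 := h.2.1 _ hp _ hu
  rw [← e1] at h2
  rw [e2, h1, h2, mul_assoc]

lemma IsHomExt.fderiv_smul (h : IsHomExt n θ ⊤ s G) {x : V n} (hx : x ∈ openCone n θ)
    {l : ℝ} (hl : 0 < l) : fderiv ℝ G (l • x) = fderiv ℝ G x := by
  have hev : (fun y => G (l • y)) =ᶠ[nhds x] fun y => l * G y := by
    filter_upwards [(isOpen_openCone n θ).mem_nhds hx] with y hy using h.apply_smul hy hl
  have h1 := hev.fderiv_eq (𝕜 := ℝ)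
  rw [fderiv_comp_smul,
    fderiv_const_mul (h.differentiableAt (openCone_subset_coneCap hx))] at h1
  exact smul_right_injective _ hl.ne' h1

lemma IsHomExt.smul_fderiv_fderiv_smul (h : IsHomExt n θ ⊤ s G) {x : V n} (hx : x ∈ openCone n θ)
    {l : ℝ} (hl : 0 < l) :
    l • fderiv ℝ (fderiv ℝ G) (l • x) = fderiv ℝ (fderiv ℝ G) x := by
  have hev : (fun y => fderiv ℝ G (l • y)) =ᶠ[nhds x] fderiv ℝ G := by
    filter_upwards [(isOpen_openCone n θ).mem_nhds hx] with y hy using h.fderiv_smul hy hl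
  have h1 := hev.fderiv_eq (𝕜 := ℝ)
  rwa [fderiv_comp_smul] at h1

lemma IsHomExt.hessQ_self (h : IsHomExt n θ ⊤ s G) {x : V n} (hx : x ∈ openCone n θ)
    (v : V n) : hessQ n G x x v = 0 := by
  have hd : HasFDerivAt (fderiv ℝ G) (fderiv ℝ (fderiv ℝ G) x) ((1 : ℝ) • x) := by
    rw [one_smul]
    exact (h.differentiableAt_fderiv (openCone_subset_coneCap hx)).hasFDerivAt
  have hl : HasDerivAt (fun l : ℝ => l • x) x 1 := by
    simpa using (hasDerivAt_id (1 : ℝ)).smul_const x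
  have h1 := hd.comp_hasDerivAt (1 : ℝ) hl
  have h2 : HasDerivAt (fderiv ℝ G ∘ fun l : ℝ => l • x) 0 1 := by
    refine (hasDerivAt_const (1 : ℝ) (fderiv ℝ G x)).congr_of_eventuallyEq ?_
    filter_upwards [lt_mem_nhds (zero_lt_one (α := ℝ))] with l hl0 using h.fderiv_smul hx hl0
  rw [hessQ, h1.unique h2]
  rfl

lemma hessM_apply (u : V n) (i j : Fin (n + 1)) :
    hessM n G u i j = hessQ n G u (EuclideanSpace.single i 1) (EuclideanSpace.single j 1) :=
  rfl

lemma IsHomExt.hessQ_eq_inv_norm_mul (h : IsHomExt n θ ⊤ s G) {x : V n}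
    (hx : x ∈ openCone n θ) (v w : V n) :
    hessQ n G x v w = ‖x‖⁻¹ * hessQ n G (‖x‖⁻¹ • x) v w := by
  have := h.smul_fderiv_fderiv_smul hx (inv_pos.2 (norm_pos_of_mem_openCone hx))
  rw [hessQ, ← this]
  rfl

lemma IsHomExt.hessQ_nonneg (h : IsHomExt n θ ⊤ s G) (hτ : TauNonneg n θ G) {x : V n}
    (hx : x ∈ openCone n θ) (v : V n) : 0 ≤ hessQ n G x v v := by
  rw [h.hessQ_eq_inv_norm_mul hx]
  exact mul_nonneg (inv_nonneg.2 (norm_nonneg _)) (hτ _ (inv_norm_smul_mem_sphCap hx) v)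

/-- Arithmetic-mean form of Cauchy–Schwarz for the positive semidefinite Hessian. -/
lemma IsHomExt.two_mul_abs_hessQ_le (h : IsHomExt n θ ⊤ s G) (hτ : TauNonneg n θ G)
    {u : V n} (hu : u ∈ sphCap n θ) (v w : V n) :
    2 * |hessQ n G u v w| ≤ hessQ n G u v v + hessQ n G u w w := by
  have hs := h.hessQ_symm (sphCap_subset_coneCap hu) w v
  have h1 := hτ u hu (v + w)
  have h2 := hτ u hu (v - w)
  simp only [hessQ, map_add, map_sub, add_apply, sub_apply] at *
  rcases abs_cases (fderiv ℝ (fderiv ℝ G) u v w) with ⟨e, -⟩ | ⟨e, -⟩ <;> rw [e] <;> linarith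

/-- The vertical derivative is nonnegative on the vertical half-lines issuing from the boundary
circle of the spherical cap. -/
lemma IsHomExt.fderiv_Etop_nonneg_of_bdry (h : IsHomExt n θ ⊤ s G) (hθ : θ ∈ Ioc 0 (π / 2))
    (hτ : TauNonneg n θ G) (hcap : IsCapillaryF n θ G) {x : V n} (hx : x (Fin.last n) = 0)
    (hxn : ‖x‖ = Real.sin θ) {r : ℝ} (hr : Real.cos θ ≤ r) :
    0 ≤ fderiv ℝ G (x + r • Etop n) (Etop n) := by
  have hcos : 0 ≤ Real.cos θ :=
    Real.cos_nonneg_of_mem_Icc ⟨by linarith [hθ.1, Real.pi_pos], hθ.2⟩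
  have hsin : 0 < Real.sin θ :=
    Real.sin_pos_of_pos_of_lt_pi hθ.1 (by linarith [hθ.2, Real.pi_pos])
  have hlast : ∀ r : ℝ, (x + r • Etop n) (Fin.last n) = r := by
    intro r
    simp [hx, Etop_last]
  have hb : x + Real.cos θ • Etop n ∈ sphCapBdry n θ := by
    refine ⟨?_, hlast _⟩
    have := norm_add_smul_Etop_sq hx (Real.cos θ)
    rw [hxn, Real.sin_sq_add_cos_sq] at this
    exact (pow_eq_one_iff_of_nonneg (norm_nonneg _) two_ne_zero).1 this
  have hin : ∀ r : ℝ, Real.cos θ < r → x + r • Etop n ∈ openCone n θ := by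
    intro r hr
    change Real.cos θ * ‖x + r • Etop n‖ < (x + r • Etop n) (Fin.last n)
    rw [hlast]
    refine lt_of_pow_lt_pow_left₀ 2 (hcos.trans hr.le) ?_
    rw [mul_pow, norm_add_smul_Etop_sq hx, hxn]
    have h1 := Real.sin_sq_add_cos_sq θ
    have h2 : Real.cos θ ^ 2 < r ^ 2 := by gcongr
    have h3 : 0 < Real.sin θ ^ 2 := by positivity
    have h4 : Real.cos θ ^ 2 = 1 - Real.sin θ ^ 2 := by linarith
    rw [h4] at h2 ⊢
    nlinarith
  have hcone : ∀ r : ℝ, Real.cos θ ≤ r → x + r • Etop n ∈ coneCap n θ := by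
    intro r hr
    rcases hr.eq_or_lt with rfl | hr
    · exact sphCap_subset_coneCap ⟨hb.1, hb.2.ge⟩
    · exact openCone_subset_coneCap (hin r hr)
  have hder : ∀ r : ℝ, Real.cos θ ≤ r →
      HasDerivAt (fun r : ℝ => fderiv ℝ G (x + r • Etop n) (Etop n))
        (hessQ n G (x + r • Etop n) (Etop n) (Etop n)) r := by
    intro r hr
    have h1 : HasDerivAt (fun r : ℝ => x + r • Etop n) (Etop n) r := by
      simpa using ((hasDerivAt_id r).smul_const (Etop n)).const_add x
    exact hasDerivAt_fderiv_apply (h.differentiableAt_fderiv (hcone r hr)) h1 _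
  have hmono : MonotoneOn (fun r : ℝ => fderiv ℝ G (x + r • Etop n) (Etop n))
      (Ici (Real.cos θ)) := by
    refine monotoneOn_of_deriv_nonneg (convex_Ici _)
      (fun r hr => (hder r hr).continuousAt.continuousWithinAt) ?_ ?_
    · intro r hr
      rw [interior_Ici] at hr
      exact (hder r (le_of_lt hr)).differentiableAt.differentiableWithinAt
    · intro r hr
      rw [interior_Ici] at hr
      rw [(hder r (le_of_lt hr)).deriv]
      exact h.hessQ_nonneg hτ (hin r hr) _
  have := hmono (mem_Ici.2 le_rfl) (mem_Ici.2 hr) hr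
  simpa only [hcap _ hb] using this

lemma IsHomExt.fderiv_Etop_nonneg (h : IsHomExt n θ ⊤ s G) (hθ : θ ∈ Ioc 0 (π / 2))
    (hτ : TauNonneg n θ G) (hcap : IsCapillaryF n θ G) {x : V n} (hx : x (Fin.last n) = 0)
    (hx0 : x ≠ 0) {r : ℝ} (hr : x + r • Etop n ∈ openCone n θ) :
    0 ≤ fderiv ℝ G (x + r • Etop n) (Etop n) := by
  have hsin : 0 < Real.sin θ :=
    Real.sin_pos_of_pos_of_lt_pi hθ.1 (by linarith [hθ.2, Real.pi_pos])
  have hcos : 0 ≤ Real.cos θ :=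
    Real.cos_nonneg_of_mem_Icc ⟨by linarith [hθ.1, Real.pi_pos], hθ.2⟩
  have hxp : 0 < ‖x‖ := norm_pos_iff.2 hx0
  have hl : 0 < Real.sin θ / ‖x‖ := div_pos hsin hxp
  rw [← h.fderiv_smul hr hl, smul_add, smul_smul]
  refine h.fderiv_Etop_nonneg_of_bdry hθ hτ hcap (by simp [hx]) ?_ ?_
  · rw [norm_smul, Real.norm_of_nonneg hl.le, div_mul_cancel₀ _ hxp.ne']
  · have h1 : Real.cos θ * ‖x + r • Etop n‖ < (x + r • Etop n) (Fin.last n) := hr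
    have h2 : (x + r • Etop n) (Fin.last n) = r := by simp [hx, Etop_last]
    rw [h2] at h1
    have hr0 : 0 ≤ r := (mul_nonneg hcos (norm_nonneg _)).trans h1.le
    rw [div_mul_eq_mul_div, le_div_iff₀ hxp]
    refine le_of_sq_le_sq ?_ (by positivity)
    have h3 : (Real.cos θ * ‖x + r • Etop n‖) ^ 2 ≤ r ^ 2 := by gcongr
    rw [mul_pow, norm_add_smul_Etop_sq hx] at h3
    nlinarith [Real.sin_sq_add_cos_sq θ]

/-- Along a horizontal segment starting at the pole, `G` dominates the linear interpolation
between `0` and its value at the endpoint. -/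
lemma IsHomExt.mul_le_apply (h : IsHomExt n θ ⊤ s G) (hθ : θ ∈ Ioc 0 (π / 2))
    (hτ : TauNonneg n θ G) (hcap : IsCapillaryF n θ G) {x : V n} (hx : x (Fin.last n) = 0)
    (hx0 : x ≠ 0) (hxO : x + Etop n ∈ openCone n θ) {t : ℝ} (ht : 0 < t) (ht1 : t ≤ 1) :
    t * G (x + Etop n) ≤ G (t • x + Etop n) := by
  have hin : ∀ r : ℝ, 1 ≤ r → x + r • Etop n ∈ openCone n θ := by
    intro r hr
    have := add_smul_Etop_mem_openCone hxO (sub_nonneg.2 hr)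
    rwa [add_assoc, sub_smul, one_smul, add_sub_cancel] at this
  have hder : ∀ r : ℝ, 1 ≤ r → HasDerivAt (fun r : ℝ => G (x + r • Etop n))
      (fderiv ℝ G (x + r • Etop n) (Etop n)) r := by
    intro r hr
    have h1 : HasDerivAt (fun r : ℝ => x + r • Etop n) (Etop n) r := by
      simpa using ((hasDerivAt_id r).smul_const (Etop n)).const_add x
    exact ((h.differentiableAt
      (openCone_subset_coneCap (hin r hr))).hasFDerivAt).comp_hasDerivAt r h1
  have hmono : MonotoneOn (fun r : ℝ => G (x + r • Etop n)) (Ici 1) := by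
    refine monotoneOn_of_deriv_nonneg (convex_Ici _)
      (fun r hr => (hder r hr).continuousAt.continuousWithinAt) ?_ ?_
    · intro r hr
      rw [interior_Ici] at hr
      exact (hder r (le_of_lt hr)).differentiableAt.differentiableWithinAt
    · intro r hr
      rw [interior_Ici] at hr
      rw [(hder r (le_of_lt hr)).deriv]
      exact h.fderiv_Etop_nonneg hθ hτ hcap hx hx0 (hin r (le_of_lt hr))
  have ht' : 1 ≤ t⁻¹ := (one_le_inv₀ ht).2 ht1
  have h1 := hmono (mem_Ici.2 le_rfl) (mem_Ici.2 ht') ht'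
  have h2 := h.apply_smul (hin _ ht') ht
  rw [smul_add, smul_inv_smul₀ ht.ne'] at h2
  rw [h2]
  simp only [one_smul] at h1
  exact mul_le_mul_of_nonneg_left h1 ht.le

lemma norm_hessQ_self_le (u v : V n) :
    ‖hessQ n G u v v‖ ≤ ‖fderiv ℝ (fderiv ℝ G) u‖ * ‖v‖ ^ 2 := by
  rw [sq, ← mul_assoc]
  exact (fderiv ℝ (fderiv ℝ G) u).le_opNorm₂ v v

lemma IsHomExt.norm_hessQ_le (h : IsHomExt n θ ⊤ s G) {A : ℝ}
    (hA : ∀ u ∈ sphCap n θ, ‖fderiv ℝ (fderiv ℝ G) u‖ ≤ A) {y : V n} (hy : y ∈ openCone n θ)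
    (hy1 : 1 ≤ ‖y‖) (v : V n) : ‖hessQ n G y v v‖ ≤ A * ‖v‖ ^ 2 := by
  rw [h.hessQ_eq_inv_norm_mul hy, norm_mul, norm_inv, norm_norm]
  refine (mul_le_of_le_one_left (norm_nonneg _) (inv_le_one_of_one_le₀ hy1)).trans ?_
  exact (norm_hessQ_self_le _ v).trans
    (mul_le_mul_of_nonneg_right (hA _ (inv_norm_smul_mem_sphCap hy)) (sq_nonneg _))

/-- Quadratic upper bound on horizontal segments starting at the pole. -/
lemma IsHomExt.apply_le_quadratic (h : IsHomExt n θ ⊤ s G) {A ρ : ℝ}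
    (hA : ∀ u ∈ sphCap n θ, ‖fderiv ℝ (fderiv ℝ G) u‖ ≤ A)
    (hρ : Metric.closedBall (Etop n) ρ ⊆ openCone n θ) {x : V n} (hx : x (Fin.last n) = 0)
    (hxρ : ‖x‖ ≤ ρ) {t : ℝ} (ht : 0 ≤ t) (ht1 : t ≤ 1) :
    G (t • x + Etop n) ≤ G (Etop n) + t * fderiv ℝ G (Etop n) x + A * t ^ 2 * ‖x‖ ^ 2 := by
  have hin : ∀ r ∈ Icc (0 : ℝ) 1, r • x + Etop n ∈ openCone n θ := by
    intro r hr
    refine hρ ?_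
    rw [mem_closedBall_iff_norm, add_sub_cancel_right, norm_smul, Real.norm_of_nonneg hr.1]
    exact (mul_le_of_le_one_left (norm_nonneg _) hr.2).trans hxρ
  have hpath : ∀ r : ℝ, HasDerivAt (fun r : ℝ => r • x + Etop n) x r := fun r => by
    simpa using ((hasDerivAt_id r).smul_const x).add_const (Etop n)
  have hd1 : ∀ r ∈ Icc (0 : ℝ) 1, HasDerivAt (fun r : ℝ => G (r • x + Etop n))
      (fderiv ℝ G (r • x + Etop n) x) r := fun r hr =>
    ((h.differentiableAt
      (openCone_subset_coneCap (hin r hr))).hasFDerivAt).comp_hasDerivAt r (hpath r)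
  have hd2 : ∀ r ∈ Icc (0 : ℝ) 1, HasDerivAt (fun r : ℝ => fderiv ℝ G (r • x + Etop n) x)
      (hessQ n G (r • x + Etop n) x x) r := by
    intro r hr
    have hD := h.differentiableAt_fderiv (openCone_subset_coneCap (hin r hr))
    exact hasDerivAt_fderiv_apply (γ := fun r : ℝ => r • x + Etop n) hD (hpath r) x
  have hbd : ∀ r ∈ Icc (0 : ℝ) 1, ‖hessQ n G (r • x + Etop n) x x‖ ≤ A * ‖x‖ ^ 2 := by
    intro r hr
    have hn1 : 1 ≤ ‖r • x + Etop n‖ := by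
      have h1 := norm_add_smul_Etop_sq (x := r • x) (by simp [hx]) 1
      rw [one_smul] at h1
      refine (one_le_sq_iff₀ (norm_nonneg _)).1 ?_
      linarith [sq_nonneg ‖r • x‖]
    exact h.norm_hessQ_le hA (hin r hr) hn1 x
  have hfin := le_quadratic_of_norm_second_deriv_le hd1 hd2 hbd ⟨ht, ht1⟩
  simp only [zero_smul, zero_add] at hfin
  linarith

end HomExt

/-- A real function with a local maximum has nonpositive second derivative there. -/
lemma IsLocalMax.second_deriv_nonpos {f f' : ℝ → ℝ} {a d : ℝ} (hmax : IsLocalMax f a)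
    (hf : ∀ᶠ r in nhds a, HasDerivAt f (f' r) r) (hf' : HasDerivAt f' d a) : d ≤ 0 := by
  by_contra! hd
  have hev : deriv f =ᶠ[nhds a] f' := hf.mono fun r hr => hr.deriv
  have h2 : deriv (deriv f) a = d := by rw [hev.deriv_eq, hf'.deriv]
  have hmin : IsLocalMin f a := isLocalMin_of_deriv_deriv_pos (by rwa [h2]) hmax.deriv_eq_zero
    hf.self_of_nhds.continuousAt
  have hconst : f =ᶠ[nhds a] fun _ => f a := by
    filter_upwards [hmax, hmin] with r h1 h2 using le_antisymm h1 h2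
  have h3 : deriv f =ᶠ[nhds a] fun _ => 0 := by
    simpa using hconst.deriv
  rw [h3.deriv_eq, deriv_const] at h2
  exact hd.ne h2

/-- The elementary symmetric function `σ_k` of a matrix with small entries is small. -/
lemma exists_sigma_lt (N : ℕ) {k : ℕ} (hk : 1 ≤ k) (hkN : k ≤ N) {c₀ : ℝ} (hc₀ : 0 < c₀) :
    ∃ δ > 0, ∀ M : Matrix (Fin N) (Fin N) ℝ, (∀ i j, |M i j| < δ) →
      (-1 : ℝ) ^ k * M.charpoly.coeff (N - k) < c₀ := by
  have hcoeff : ∀ M : Matrix (Fin N) (Fin N) ℝ, M.charpoly.coeff (N - k) =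
      MvPolynomial.eval (fun ij : Fin N × Fin N => M ij.1 ij.2)
        ((Matrix.charpoly.univ ℝ (Fin N)).coeff (N - k)) := by
    intro M
    exact (Matrix.charpoly.univ_coeff_eval₂Hom (Fin N) (RingHom.id ℝ)
      (fun ij => M ij.1 ij.2) (N - k)).symm
  have hcont : Continuous fun m : Fin N × Fin N → ℝ => (-1 : ℝ) ^ k *
      MvPolynomial.eval m ((Matrix.charpoly.univ ℝ (Fin N)).coeff (N - k)) :=
    continuous_const.mul (MvPolynomial.continuous_eval _)
  have h0 : MvPolynomial.eval (0 : Fin N × Fin N → ℝ)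
      ((Matrix.charpoly.univ ℝ (Fin N)).coeff (N - k)) = 0 := by
    have := hcoeff 0
    rw [Matrix.charpoly_zero, Polynomial.coeff_X_pow, Fintype.card_fin,
      if_neg (by omega)] at this
    exact this.symm
  have hnhds : {m : Fin N × Fin N → ℝ | (-1 : ℝ) ^ k *
      MvPolynomial.eval m ((Matrix.charpoly.univ ℝ (Fin N)).coeff (N - k)) < c₀} ∈
      nhds (0 : Fin N × Fin N → ℝ) :=
    (isOpen_lt hcont continuous_const).mem_nhds (by
      rw [mem_ofPred_eq, h0, mul_zero]
      exact hc₀)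
  obtain ⟨δ, hδ, hball⟩ := Metric.mem_nhds_iff.1 hnhds
  refine ⟨δ, hδ, fun M hM => ?_⟩
  rw [hcoeff]
  refine hball ?_
  rw [mem_ball_zero_iff, pi_norm_lt_iff hδ]
  exact fun ij => hM ij.1 ij.2

/-- If the Hessian at `y` is bounded by `2c` in horizontal directions, then the entries of the
Hessian matrix on the sphere are bounded by `4c`. -/
lemma IsHomExt.abs_hessM_le {n : ℕ} {θ c : ℝ} {s G : V n → ℝ} (h : IsHomExt n θ ⊤ s G)
    (hτ : TauNonneg n θ G) {x : V n} (hx : x (Fin.last n) = 0) (hx1 : ‖x‖ ≤ 1) (hc : 0 ≤ c)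
    (hO : x + Etop n ∈ openCone n θ)
    (hQ : ∀ v : V n, v (Fin.last n) = 0 → hessQ n G (x + Etop n) v v ≤ 2 * c * ‖v‖ ^ 2)
    (i j : Fin (n + 1)) :
    |hessM n G (‖x + Etop n‖⁻¹ • (x + Etop n)) i j| ≤ 4 * c := by
  set y := x + Etop n with hy
  have hyp := norm_pos_of_mem_openCone hO
  have hy2 : ‖y‖ ≤ 2 := by
    have := norm_add_le x (Etop n)
    rw [norm_Etop] at this
    linarith
  have hEE : hessQ n G y (Etop n) (Etop n) = hessQ n G y x x := by
    have e1 := h.hessQ_self hO (Etop n)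
    have e2 := h.hessQ_self hO x
    have e3 := h.hessQ_symm (openCone_subset_coneCap hO) x (Etop n)
    have hadd : ∀ w, hessQ n G y y w = hessQ n G y x w + hessQ n G y (Etop n) w := by
      intro w
      simp only [hessQ, ← add_apply, ← map_add]
      rfl
    rw [hadd] at e1 e2
    linarith
  have hdiag : ∀ i, hessQ n G y (EuclideanSpace.single i 1) (EuclideanSpace.single i 1)
      ≤ 2 * c := by
    intro i
    rcases eq_or_ne i (Fin.last n) with rfl | hi
    · change hessQ n G y (Etop n) (Etop n) ≤ 2 * c
      rw [hEE]
      refine (hQ x hx).trans (mul_le_of_le_one_right (by positivity) ?_)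
      exact pow_le_one₀ (norm_nonneg _) hx1
    · have := hQ (EuclideanSpace.single i 1) (by simp [hi.symm])
      simpa using this
  have hdiag' : ∀ i, hessQ n G (‖y‖⁻¹ • y) (EuclideanSpace.single i 1)
      (EuclideanSpace.single i 1) ≤ 4 * c := by
    intro i
    have h1 := hdiag i
    rw [h.hessQ_eq_inv_norm_mul hO, inv_mul_eq_div, div_le_iff₀ hyp] at h1
    nlinarith
  have := h.two_mul_abs_hessQ_le hτ (inv_norm_smul_mem_sphCap hO)
    (EuclideanSpace.single i 1) (EuclideanSpace.single j 1)
  rw [hessM_apply]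
  linarith [hdiag' i, hdiag' j]

/-- Maximum principle: if the Hessian matrix is never small, then `G` deviates quadratically from
its tangent plane at the pole somewhere on each small horizontal sphere. -/
lemma IsHomExt.exists_le_sub_tangent {n : ℕ} {θ c ρ : ℝ} {s G : V n → ℝ}
    (h : IsHomExt n θ ⊤ s G) (hτ : TauNonneg n θ G) (hc : 0 ≤ c) (hρ0 : 0 < ρ) (hρ1 : ρ ≤ 1)
    (hρ : Metric.closedBall (Etop n) ρ ⊆ openCone n θ)
    (hbig : ∀ u ∈ sphCap n θ, ∃ i j, 4 * c < |hessM n G u i j|) :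
    ∃ x : V n, x (Fin.last n) = 0 ∧ ‖x‖ = ρ ∧
      c * ρ ^ 2 ≤ G (x + Etop n) - G (Etop n) - fderiv ℝ G (Etop n) x := by
  have hin : ∀ x : V n, ‖x‖ ≤ ρ → x + Etop n ∈ openCone n θ := fun x hx => hρ (by
    rwa [mem_closedBall_iff_norm, add_sub_cancel_right])
  set K : Set (V n) := Metric.closedBall 0 ρ ∩ {x | x (Fin.last n) = 0} with hK
  have hKc : IsCompact K := (isCompact_closedBall _ _).inter_right
    (isClosed_eq (by fun_prop) continuous_const)
  set H : V n → ℝ := fun x =>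
    G (x + Etop n) - G (Etop n) - fderiv ℝ G (Etop n) x - c * ‖x‖ ^ 2 with hH
  have h0K : (0 : V n) ∈ K := ⟨by simp [hρ0.le], by simp⟩
  have hHc : ContinuousOn H K := by
    have h1 : ContinuousOn (fun x => G (x + Etop n)) K := fun x hx =>
      (ContinuousAt.comp (f := fun x : V n => x + Etop n) (g := G)
        (h.differentiableAt (openCone_subset_coneCap
          (hin x (mem_closedBall_zero_iff.1 hx.1)))).continuousAt
        (by fun_prop)).continuousWithinAt
    have h2 : ContinuousOn (fun x : V n => c * ‖x‖ ^ 2) K := by fun_prop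
    exact ((h1.sub continuousOn_const).sub (fderiv ℝ G (Etop n)).continuous.continuousOn).sub h2
  obtain ⟨x, hxK, hmax⟩ := hKc.exists_isMaxOn ⟨0, h0K⟩ hHc
  have hx : x (Fin.last n) = 0 := hxK.2
  have hxρ : ‖x‖ ≤ ρ := mem_closedBall_zero_iff.1 hxK.1
  have hH0 : 0 ≤ H x := by
    have := hmax h0K
    simpa [hH] using this
  rcases hxρ.eq_or_lt with hxe | hxl
  · refine ⟨x, hx, hxe, ?_⟩
    simp only [hH, hxe] at hH0
    linarith
  exfalso
  have hQ : ∀ v : V n, v (Fin.last n) = 0 →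
      hessQ n G (x + Etop n) v v ≤ 2 * c * ‖v‖ ^ 2 := by
    intro v hv
    have hpath : ∀ r : ℝ, HasDerivAt (fun r : ℝ => x + r • v) v r := fun r => by
      simpa using ((hasDerivAt_id r).smul_const v).const_add x
    have hpath' : ∀ r : ℝ, HasDerivAt (fun r : ℝ => x + r • v + Etop n) v r := fun r =>
      (hpath r).add_const _
    have hnear : ∀ᶠ r : ℝ in nhds 0, ‖x + r • v‖ < ρ := by
      have hcont : ContinuousAt (fun r : ℝ => ‖x + r • v‖) 0 := by fun_prop
      exact hcont.eventually_lt_const (by simpa using hxl)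
    have hloc : IsLocalMax (fun r : ℝ => H (x + r • v)) 0 := by
      filter_upwards [hnear] with r hr
      have hrK : x + r • v ∈ K := ⟨by simpa using hr.le, by simp [hx, hv]⟩
      simpa using hmax hrK
    have hd1 : ∀ᶠ r : ℝ in nhds 0, HasDerivAt (fun r : ℝ => H (x + r • v))
        (fderiv ℝ G (x + r • v + Etop n) v - fderiv ℝ G (Etop n) v
          - c * (2 * ⟪x + r • v, v⟫)) r := by
      filter_upwards [hnear] with r hr
      have h1 := ((h.differentiableAt (openCone_subset_coneCap
        (hin _ hr.le))).hasFDerivAt).comp_hasDerivAt r (hpath' r)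
      have h2 := (fderiv ℝ G (Etop n)).hasFDerivAt.comp_hasDerivAt r (hpath r)
      have h3 := ((hpath r).norm_sq).const_mul c
      exact ((h1.sub_const _).sub h2).sub h3
    have hd2 : HasDerivAt (fun r : ℝ => fderiv ℝ G (x + r • v + Etop n) v
        - fderiv ℝ G (Etop n) v - c * (2 * ⟪x + r • v, v⟫))
        (hessQ n G (x + Etop n) v v - c * (2 * ⟪v, v⟫)) 0 := by
      have hD := h.differentiableAt_fderiv (openCone_subset_coneCap (hin _ hxl.le))
      rw [show x + Etop n = x + (0 : ℝ) • v + Etop n by rw [zero_smul, add_zero]] at hD ⊢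
      have h1 := hasDerivAt_fderiv_apply hD (hpath' 0) v
      have h2 : HasDerivAt (fun r : ℝ => ⟪x + r • v, v⟫) ⟪v, v⟫ 0 := by
        have h4 := (hpath 0).inner ℝ (hasDerivAt_const (0 : ℝ) v)
        rwa [inner_zero_right, zero_add] at h4
      exact (h1.sub_const (fderiv ℝ G (Etop n) v)).sub ((h2.const_mul 2).const_mul c)
    have := hloc.second_deriv_nonpos hd1 hd2
    rw [real_inner_self_eq_norm_sq] at this
    linarith
  obtain ⟨i, j, hij⟩ := hbig _ (inv_norm_smul_mem_sphCap (hin x hxl.le))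
  exact hij.not_ge (h.abs_hessM_le hτ hx (hxρ.trans hρ1) hc (hin x hxl.le) hQ i j)

/-- uniform non-collapsing in the vertical direction. -/
theorem capillary_noncollapsing_vertical (n k : ℕ) (hn : 1 ≤ n) (θ : ℝ)
    (hθ : θ ∈ Ioc 0 (π / 2)) (hk : 1 ≤ k) (hkn : k ≤ n)
    (A c₀ : ℝ) (hA : 0 < A) (hc₀ : 0 < c₀)
    (s G : ℕ → V n → ℝ)
    (hext : ∀ i, IsHomExt n θ ⊤ (s i) (G i))
    (hcap : ∀ i, IsCapillaryF n θ (G i))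
    (hτ : ∀ i, TauPos n θ (G i))
    (hC2 : ∀ i, ∀ u ∈ sphCap n θ,
      |G i u| + ‖fderiv ℝ (G i) u‖ + ‖fderiv ℝ (fderiv ℝ (G i)) u‖ ≤ A)
    (hint : ∀ i, ∀ j : Fin (n + 1), j ≠ Fin.last n →
      ∫ ζ in capCap n θ, s i ζ * ζ j ∂μH[(n : ℝ)] = 0)
    (hσ : ∀ i, ∀ ζ ∈ capCap n θ,
      c₀ ≤ sigmaElem n k (G i) (ζ + Real.cos θ • Etop n)) :
    ∃ c : ℝ, 0 < c ∧ ∀ i, c ≤ G i (Etop n) := by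
  have hEO : Etop n ∈ openCone n θ := Etop_mem_openCone hθ
  obtain ⟨ρ₀, hρ₀, hball⟩ :=
    Metric.nhds_basis_closedBall.mem_iff.1 ((isOpen_openCone n θ).mem_nhds hEO)
  obtain ⟨ρ, hρ0, hρ1, hρ⟩ : ∃ ρ : ℝ, 0 < ρ ∧ ρ ≤ 1 ∧
      Metric.closedBall (Etop n) ρ ⊆ openCone n θ :=
    ⟨min ρ₀ 1, lt_min hρ₀ one_pos, min_le_right _ _,
      (Metric.closedBall_subset_closedBall (min_le_left _ _)).trans hball⟩
  obtain ⟨δ, hδ, hsmall⟩ := exists_sigma_lt (n + 1) hk (by omega) hc₀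
  obtain ⟨c, hc, hcδ, hcA⟩ : ∃ c : ℝ, 0 < c ∧ 4 * c < δ ∧ c ≤ A :=
    ⟨min (δ / 5) A, lt_min (by positivity) hA, by linarith [min_le_left (δ / 5) A],
      min_le_right _ _⟩
  refine ⟨c ^ 2 * ρ ^ 2 / (4 * A), by positivity, fun i => ?_⟩
  have h := hext i
  have hbig : ∀ u ∈ sphCap n θ, ∃ p q, 4 * c < |hessM n (G i) u p q| := by
    intro u hu
    by_contra! hcon
    have hζ : u - Real.cos θ • Etop n ∈ capCap n θ := by
      refine ⟨?_, by rw [sub_add_cancel]; exact hu.1⟩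
      have := hu.2
      simpa [Etop_last] using this
    have h1 := hσ i _ hζ
    rw [sub_add_cancel] at h1
    exact h1.not_gt (hsmall _ fun p q => (hcon p q).trans_lt hcδ)
  obtain ⟨x, hx, hxρ, hdev⟩ := h.exists_le_sub_tangent (hτ i).1 hc.le hρ0 hρ1 hρ hbig
  have hx0 : x ≠ 0 := by
    rw [← norm_pos_iff, hxρ]
    exact hρ0
  have hxO : x + Etop n ∈ openCone n θ := hρ (by
    rw [mem_closedBall_iff_norm, add_sub_cancel_right, hxρ])
  obtain ⟨t, ht⟩ : ∃ t : ℝ, t = c / (2 * A) := ⟨_, rfl⟩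
  have ht0 : 0 < t := ht ▸ by positivity
  have ht2 : t ≤ 1 / 2 := by
    rw [ht, div_le_div_iff₀ (by positivity) two_pos]
    linarith
  have hAt : A * t = c / 2 := by
    rw [ht]
    field_simp
  have hlow := h.mul_le_apply hθ (hτ i).1 (hcap i) hx hx0 hxO ht0 (by linarith)
  have hupp := h.apply_le_quadratic (A := A)
    (fun u hu => by
      have h1 := hC2 i u hu
      have h2 := abs_nonneg (G i u)
      have h3 := norm_nonneg (fderiv ℝ (G i) u)
      linarith) hρ hx hxρ.le ht0.le (by linarith)
  have hdevt := mul_le_mul_of_nonneg_left hdev ht0.le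
  have hquad : A * t ^ 2 * ‖x‖ ^ 2 = t * (c * ρ ^ 2) / 2 := by
    rw [hxρ, sq t, ← mul_assoc, hAt]
    ring
  have hconst : c ^ 2 * ρ ^ 2 / (4 * A) = t * (c * ρ ^ 2) / 2 := by
    rw [ht]
    field_simp
    ring
  have hkey : t * (c * ρ ^ 2) / 2 ≤ (1 - t) * G i (Etop n) := by
    rw [hquad] at hupp
    linarith
  have hpos : 0 < G i (Etop n) :=
    pos_of_mul_pos_right (lt_of_lt_of_le (by positivity) hkey) (by linarith)
  rw [hconst]
  nlinarith
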